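/- Let φ = (1+√5)/2, 𝒮 = (1/√(2+φ))·[[1,φ],[φ,-1]], and 𝒯 = diag(e^{2πi·53/60}, e^{2πi·17/60}). Then 𝒮⁴ = 1 and (𝒮𝒯)³ = 𝒮², so the assignments S ↦ 𝒮 and T ↦ 𝒯 extend to a group homomorphism SL₂(ℤ) → GL₂(ℂ). -/

import Mathlib

/-!
The homomorphism comes from the presentation of `SL(2, ℤ)`, proved here as
`exists_hom_of_relations`: elements `s, t` of any monoid with `s ^ 4 = 1` and `(s t) ^ 3 = s ^ 2`
are the images of `S` and `T` under a homomorphism.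

To see this in a group `G`, let `P` be the subgroup of `SL(2, ℤ) × G` generated by `p = (S, s)` and
`q = (T, t)`. Its projection to `SL(2, ℤ)` is onto, and `P` is the graph of a homomorphism as soon
as this projection is injective. The relations alone give a normal form
(`normalForm_of_mem_closure`): with `u = p q` and `r = p q⁻¹ p⁻¹`, every element of `P` is
`u ^ i * W * p ^ j` with `i < 3` and `W` a positive word in `q` and `r`. These lie over the
matrices `[1, 1; 0, 1]` and `[1, 0; 1, 1]`, so a nonempty `W` lies over a nonnegative matrix with
positive diagonal and some positive off-diagonal entry. The matrices `U ^ (-i) * S ^ (-j)` are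
never of this kind, so an element of `P` over `1` has `W = 1`, whence `i = 0` and `4 ∣ j`.

For the relations, let `x = exp (π I / 10)` and `y = x⁻²`. Then `φ = x ^ 2 + y` and
`√(2 + φ) = x + x⁻¹`, and `φ ^ 2 = φ + 1` gives `𝒮 ^ 2 = 1`. If `𝒯 = diag (a, b)`, then
`b = -a y` and `a ^ 3 = -x ^ 3`, so `𝒮𝒯` is a multiple of `M = [1, -φ y; φ, y]`, for which
`(tr M) ^ 2 = det M`. By Cayley–Hamilton `M ^ 3 = -(tr M) ^ 3 = -(1 + y) ^ 3`, and the scalars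
cancel to give `(𝒮𝒯) ^ 3 = 1`.
-/

open Matrix Complex MatrixGroups

/-- The generator `S` of `SL(2, ℤ)`. -/
def SmatZ : SL(2, ℤ) :=
  ⟨!![0, -1; 1, 0], by norm_num [Matrix.det_fin_two_of]⟩

/-- The generator `T` of `SL(2, ℤ)`. -/
def TmatZ : SL(2, ℤ) :=
  ⟨!![1, 1; 0, 1], by norm_num [Matrix.det_fin_two_of]⟩

/-- The golden ratio. -/
noncomputable def phi : ℝ := (1 + Real.sqrt 5) / 2

/-- The `S`-matrix of the `G₂` level 1 modular data. -/
noncomputable def calS : Matrix (Fin 2) (Fin 2) ℂ :=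
  (((Real.sqrt (2 + phi))⁻¹ : ℝ) : ℂ) • !![1, (phi : ℂ); (phi : ℂ), -1]

/-- The `T`-matrix of the `G₂` level 1 modular data. -/
noncomputable def calT : Matrix (Fin 2) (Fin 2) ℂ :=
  Matrix.diagonal ![Complex.exp (2 * Real.pi * Complex.I * (53 / 60)),
    Complex.exp (2 * Real.pi * Complex.I * (17 / 60))]

/-! ### The presentation of `SL(2, ℤ)` -/

/-- The normal form `u ^ i * W * p ^ j`, with `u = p q`, `i < 3` and `W` a positive word in `q` and
`p q⁻¹ p⁻¹`. The exponent `j` is not reduced, so it absorbs the central element `p ^ 2`. -/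
def NormalForm {H : Type*} [Group H] (p q g : H) : Prop :=
  ∃ i < 3, ∃ W ∈ Submonoid.closure {q, p * q⁻¹ * p⁻¹}, ∃ j : ℕ, g = (p * q) ^ i * W * p ^ j

section NormalForm

variable {H : Type*} [Group H] {p q : H}

lemma sq_commute_of_rel (h3 : (p * q) ^ 3 = p ^ 2) (g : H) (hg : g ∈ Subgroup.closure {p, q}) :
    Commute (p ^ 2) g := by
  have hp : Commute (p ^ 2) p := Commute.pow_self p 2
  have hu : Commute (p ^ 2) (p * q) := h3 ▸ Commute.pow_self (p * q) 3
  have hq : Commute (p ^ 2) q := by simpa using hp.inv_right.mul_right hu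
  induction hg using Subgroup.closure_induction with
  | mem x hx => rcases hx with rfl | rfl <;> assumption
  | one => exact Commute.one_right _
  | mul x y _ _ hx hy => exact hx.mul_right hy
  | inv x _ hx => exact hx.inv_right

lemma mem_of_mem_word {W : H} (hW : W ∈ Submonoid.closure {q, p * q⁻¹ * p⁻¹}) :
    W ∈ Subgroup.closure {p, q} := by
  have hp : p ∈ Subgroup.closure {p, q} := Subgroup.subset_closure (by simp)
  have hq : q ∈ Subgroup.closure {p, q} := Subgroup.subset_closure (by simp)
  induction hW using Submonoid.closure_induction with
  | mem x hx =>
    rcases hx with rfl | rfl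
    · exact hq
    · exact mul_mem (mul_mem hp (inv_mem hq)) (inv_mem hp)
  | one => exact one_mem _
  | mul x y _ _ hx hy => exact mul_mem hx hy

lemma NormalForm.mul_left_u (h3 : (p * q) ^ 3 = p ^ 2) {g : H} (h : NormalForm p q g) :
    NormalForm p q (p * q * g) := by
  obtain ⟨i, hi, W, hW, j, rfl⟩ := h
  obtain hi | rfl : i + 1 < 3 ∨ i = 2 := by omega
  · exact ⟨i + 1, hi, W, hW, j, by rw [pow_succ']; group⟩
  · have hz := (sq_commute_of_rel h3 W (mem_of_mem_word hW)).eq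
    refine ⟨0, by norm_num, W, hW, 2 + j, ?_⟩
    calc p * q * ((p * q) ^ 2 * W * p ^ j) = (p * q) ^ 3 * W * p ^ j := by
          rw [pow_succ' _ 2]; simp only [mul_assoc]
      _ = _ := by rw [h3, hz, pow_zero, one_mul, pow_add, mul_assoc]

lemma NormalForm.mul_left_p (h3 : (p * q) ^ 3 = p ^ 2) {g : H} (h : NormalForm p q g) :
    NormalForm p q (p * g) := by
  obtain ⟨i, hi, W, hW, j, rfl⟩ := h
  have hz := (sq_commute_of_rel h3 W (mem_of_mem_word hW)).eq
  have hr : p * (p * q⁻¹ * p⁻¹) = (p * q) ^ 2 := by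
    calc p * (p * q⁻¹ * p⁻¹) = p ^ 2 * (p * q)⁻¹ := by rw [pow_two]; group
      _ = (p * q) ^ 2 := by rw [← h3, pow_succ]; group
  have hru : p * (p * q) ^ 2 = p ^ 2 * (p * q⁻¹ * p⁻¹) := by
    rw [← hr, pow_two]; group
  interval_cases i
  · -- The first letter of `W` decides: `p q = u`, and `p (p q⁻¹ p⁻¹) = u ^ 2`.
    induction hW using Submonoid.closure_induction_left with
    | one => exact ⟨0, by norm_num, 1, one_mem _, j + 1, by simp [pow_succ']⟩
    | mul_left x hx W hW _ =>
      rcases hx with rfl | rfl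
      · exact ⟨1, by norm_num, W, hW, j, by group⟩
      · exact ⟨2, by norm_num, W, hW, j, by rw [← hr]; group⟩
  · -- `p u = p ^ 2 q`
    refine ⟨0, by norm_num, q * W, mul_mem (Submonoid.subset_closure (by simp)) hW, 2 + j, ?_⟩
    have hq := (sq_commute_of_rel h3 q (Subgroup.subset_closure (by simp))).eq
    calc p * ((p * q) ^ 1 * W * p ^ j) = p ^ 2 * q * W * p ^ j := by rw [pow_two]; group
      _ = q * (p ^ 2 * W) * p ^ j := by rw [hq]; simp only [mul_assoc]
      _ = _ := by rw [hz, pow_add]; simp only [pow_zero, one_mul, mul_assoc]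
  · -- `p u ^ 2 = p ^ 2 (p q⁻¹ p⁻¹)`
    have hm : p * q⁻¹ * p⁻¹ ∈ Submonoid.closure {q, p * q⁻¹ * p⁻¹} :=
      Submonoid.subset_closure (by simp)
    refine ⟨0, by norm_num, p * q⁻¹ * p⁻¹ * W, mul_mem hm hW, 2 + j, ?_⟩
    have hrz := (sq_commute_of_rel h3 _ (mem_of_mem_word hm)).eq
    calc p * ((p * q) ^ 2 * W * p ^ j) = p * (p * q) ^ 2 * W * p ^ j := by
          simp only [mul_assoc]
      _ = p * q⁻¹ * p⁻¹ * (p ^ 2 * W) * p ^ j := by rw [hru, hrz]; simp only [mul_assoc]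
      _ = _ := by rw [hz, pow_add]; simp only [pow_zero, one_mul, mul_assoc]

lemma normalForm_of_mem_closure (h4 : p ^ 4 = 1) (h3 : (p * q) ^ 3 = p ^ 2) {g : H}
    (hg : g ∈ Subgroup.closure {p, q}) : NormalForm p q g := by
  have hp {x : H} (h : NormalForm p q x) : NormalForm p q (p⁻¹ * x) := by
    have e : p⁻¹ = p * p * p := inv_eq_of_mul_eq_one_right (by rw [← h4]; simp [pow_succ, mul_assoc])
    rw [e, mul_assoc, mul_assoc]
    exact ((h.mul_left_p h3).mul_left_p h3).mul_left_p h3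
  induction hg using Subgroup.closure_induction_left with
  | one => exact ⟨0, by norm_num, 1, one_mem _, 0, by simp⟩
  | mul_left x hx y _ h =>
    rcases hx with rfl | rfl
    · exact h.mul_left_p h3
    · have := hp (h.mul_left_u h3)
      rwa [mul_assoc, inv_mul_cancel_left] at this
  | inv_mul_cancel x hx y _ h =>
    rcases hx with rfl | rfl
    · exact hp h
    · -- `q⁻¹ = u⁻¹ p`, and `u⁻¹ = u ^ 5` because `u ^ 6 = p ^ 4 = 1`.
      have h6 : (p * x) ^ 6 = 1 := by rw [show 6 = 3 * 2 from rfl, pow_mul, h3, ← pow_mul, h4]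
      have e : x⁻¹ * y = p * x * (p * x * (p * x * (p * x * (p * x * (p * y))))) := by
        have : (p * x)⁻¹ = (p * x) ^ 5 :=
          inv_eq_of_mul_eq_one_right (by rw [← pow_succ', h6])
        calc x⁻¹ * y = (p * x)⁻¹ * (p * y) := by group
          _ = _ := by rw [this]; simp only [pow_succ, pow_zero, one_mul, mul_assoc]
      rw [e]
      iterate 5 apply NormalForm.mul_left_u h3
      exact h.mul_left_p h3

end NormalForm

lemma coe_SmatZ : (SmatZ : Matrix (Fin 2) (Fin 2) ℤ) = !![0, -1; 1, 0] := rfl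

lemma coe_TmatZ : (TmatZ : Matrix (Fin 2) (Fin 2) ℤ) = !![1, 1; 0, 1] := rfl

/-- Nonempty positive words lie over nonnegative matrices with positive diagonal and positive
off-diagonal sum. -/
lemma positive_word {G : Type*} [Group G] (s t : G) {W : SL(2, ℤ) × G}
    (hW : W ∈ Submonoid.closure
      {(TmatZ, t), (SmatZ, s) * (TmatZ, t)⁻¹ * (SmatZ, s)⁻¹}) :
    W = 1 ∨ (1 ≤ W.1 0 0 ∧ 0 ≤ W.1 0 1 ∧ 0 ≤ W.1 1 0 ∧ 1 ≤ W.1 1 1 ∧ 1 ≤ W.1 0 1 + W.1 1 0) := by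
  induction hW using Submonoid.closure_induction_left with
  | one => exact Or.inl rfl
  | mul_left x hx W hW ih =>
    right
    have key : 1 ≤ W.1 0 0 ∧ 0 ≤ W.1 0 1 ∧ 0 ≤ W.1 1 0 ∧ 1 ≤ W.1 1 1 := by
      rcases ih with rfl | ih
      · simp
      · exact ⟨ih.1, ih.2.1, ih.2.2.1, ih.2.2.2.1⟩
    have hR : ((SmatZ * TmatZ⁻¹ * SmatZ⁻¹ : SL(2, ℤ)) : Matrix (Fin 2) (Fin 2) ℤ)
        = !![1, 0; 1, 1] := by
      simp [coe_SmatZ, coe_TmatZ, Matrix.adjugate_fin_two]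
    rcases hx with rfl | rfl
    · simp only [Prod.fst_mul, Matrix.SpecialLinearGroup.coe_mul, coe_TmatZ]
      simp [Matrix.mul_apply, Fin.sum_univ_two]
      omega
    · rw [Prod.fst_mul, Matrix.SpecialLinearGroup.coe_mul, Prod.fst_mul, Prod.fst_mul,
        Prod.fst_inv, Prod.fst_inv, hR]
      simp [Matrix.mul_apply, Fin.sum_univ_two]
      omega

lemma eq_one_of_fst_eq_one {G : Type*} [Group G] {s t : G} (h4 : s ^ 4 = 1)
    (h3 : (s * t) ^ 3 = s ^ 2) {g : SL(2, ℤ) × G}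
    (hg : g ∈ Subgroup.closure {(SmatZ, s), (TmatZ, t)}) (h1 : g.1 = 1) : g = 1 := by
  have hS4 : SmatZ ^ 4 = 1 := by decide
  have hST : (SmatZ * TmatZ) ^ 3 = SmatZ ^ 2 := by decide
  have hp4 : ((SmatZ, s) : SL(2, ℤ) × G) ^ 4 = 1 := by
    rw [Prod.pow_mk, hS4, h4]; rfl
  have hp3 : ((SmatZ, s) * (TmatZ, t) : SL(2, ℤ) × G) ^ 3 = (SmatZ, s) ^ 2 := by
    rw [Prod.mk_mul_mk, Prod.pow_mk, Prod.pow_mk, hST, h3]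
  obtain ⟨i, hi, W, hW, j, rfl⟩ := normalForm_of_mem_closure hp4 hp3 hg
  -- Only `j mod 4` matters, since `p ^ 4 = 1`.
  rw [pow_eq_pow_mod j hp4] at h1 ⊢
  have hj : j % 4 < 4 := Nat.mod_lt _ (by norm_num)
  generalize j % 4 = k at *
  rcases positive_word s t hW with rfl | hpos
  · have : i = 0 ∧ k = 0 := by
      simp only [Prod.fst_mul, Prod.pow_fst, Prod.fst_one] at h1
      interval_cases i <;> interval_cases k <;> first | exact ⟨rfl, rfl⟩ | (revert h1; decide)
    obtain ⟨rfl, rfl⟩ := this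
    simp
  · -- `U ^ i * W * S ^ k = 1` determines the matrix under `W`; it is never of the positive kind.
    exfalso
    simp only [Prod.fst_mul, Prod.pow_fst] at h1
    have h00 := congrArg (fun A : SL(2, ℤ) => A 0 0) h1
    have h01 := congrArg (fun A : SL(2, ℤ) => A 0 1) h1
    have h10 := congrArg (fun A : SL(2, ℤ) => A 1 0) h1
    have h11 := congrArg (fun A : SL(2, ℤ) => A 1 1) h1
    clear h1
    interval_cases i <;> interval_cases k <;>
      simp [coe_SmatZ, coe_TmatZ, pow_succ, Matrix.mul_apply, Matrix.vecMul,
        dotProduct, Fin.sum_univ_two] at h00 h01 h10 h11 <;>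
      omega

lemma closure_SmatZ_TmatZ : Subgroup.closure {SmatZ, TmatZ} = ⊤ := by
  have hS : SmatZ = ModularGroup.S := by ext i j; fin_cases i <;> fin_cases j <;> rfl
  have hT : TmatZ = ModularGroup.T := by ext i j; fin_cases i <;> fin_cases j <;> rfl
  rw [hS, hT, SpecialLinearGroup.SL2Z_generators]

lemma exists_hom_of_group_relations {G : Type*} [Group G] (s t : G) (h4 : s ^ 4 = 1)
    (h3 : (s * t) ^ 3 = s ^ 2) : ∃ ρ : SL(2, ℤ) →* G, ρ SmatZ = s ∧ ρ TmatZ = t := by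
  let P : Subgroup (SL(2, ℤ) × G) := Subgroup.closure {(SmatZ, s), (TmatZ, t)}
  let π : P →* SL(2, ℤ) := (MonoidHom.fst _ _).comp P.subtype
  have hinj : Function.Injective π := by
    rw [injective_iff_map_eq_one]
    exact fun g hg => Subtype.ext (eq_one_of_fst_eq_one h4 h3 g.2 hg)
  have hsurj : Function.Surjective π := by
    rw [← MonoidHom.range_eq_top, eq_top_iff, ← closure_SmatZ_TmatZ, Subgroup.closure_le]
    rintro _ (rfl | rfl)
    · exact ⟨⟨(SmatZ, s), Subgroup.subset_closure (by simp)⟩, rfl⟩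
    · exact ⟨⟨(TmatZ, t), Subgroup.subset_closure (by simp)⟩, rfl⟩
  let e := MulEquiv.ofBijective π ⟨hinj, hsurj⟩
  have he (g : P) : (e.symm g.1.1) = g := e.symm_apply_apply g
  refine ⟨((MonoidHom.snd _ _).comp P.subtype).comp e.symm.toMonoidHom, ?_, ?_⟩
  · exact congrArg (fun g : P => g.1.2) (he ⟨(SmatZ, s), Subgroup.subset_closure (by simp)⟩)
  · exact congrArg (fun g : P => g.1.2) (he ⟨(TmatZ, t), Subgroup.subset_closure (by simp)⟩)

/-- The universal property of the presentation of `SL(2, ℤ)`. In a monoid the relations already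
force `s` and `t` to be units. -/
lemma exists_hom_of_relations {M : Type*} [Monoid M] (s t : M) (h4 : s ^ 4 = 1)
    (h3 : (s * t) ^ 3 = s ^ 2) : ∃ ρ : SL(2, ℤ) →* M, ρ SmatZ = s ∧ ρ TmatZ = t := by
  have hs : IsUnit s := IsUnit.of_pow_eq_one h4 (by norm_num)
  have hst : IsUnit (s * t) := by
    refine IsUnit.of_pow_eq_one (n := 6) ?_ (by norm_num)
    rw [show 6 = 3 * 2 from rfl, pow_mul, h3, ← pow_mul, h4]
  have ht : IsUnit t := by
    have : s ^ 3 * (s * t) = t := by rw [← mul_assoc, ← pow_succ, h4, one_mul]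
    exact this ▸ (hs.pow 3).mul hst
  obtain ⟨s, rfl⟩ := hs
  obtain ⟨t, rfl⟩ := ht
  obtain ⟨ρ, hρS, hρT⟩ := exists_hom_of_group_relations s t
    (Units.ext (by simpa using h4)) (Units.ext (by simpa using h3))
  exact ⟨(Units.coeHom M).comp ρ, by simp [hρS], by simp [hρT]⟩

/-! ### The relations for `𝒮` and `𝒯` -/

lemma phi_eq_two_cos : phi = 2 * Real.cos (Real.pi / 5) := by
  rw [Real.cos_pi_div_five, phi]; ring

lemma phi_sq : phi ^ 2 = phi + 1 := by
  have h5 : Real.sqrt 5 ^ 2 = 5 := Real.sq_sqrt (by norm_num)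
  rw [phi]; linear_combination h5 / 4

lemma sqrt_two_add_phi : Real.sqrt (2 + phi) = 2 * Real.cos (Real.pi / 10) := by
  have hc : 0 ≤ Real.cos (Real.pi / 10) :=
    Real.cos_nonneg_of_mem_Icc ⟨by linarith [Real.pi_pos], by linarith [Real.pi_pos]⟩
  have hcos := Real.cos_sq (Real.pi / 10)
  rw [show 2 * (Real.pi / 10) = Real.pi / 5 by ring] at hcos
  have h : 2 + phi = (2 * Real.cos (Real.pi / 10)) ^ 2 := by
    rw [phi_eq_two_cos]; linear_combination -4 * hcos
  rw [h, Real.sqrt_sq (by positivity)]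

/-- The entries of `𝒮` and `𝒯` in terms of `x = exp (π I / 10)` and `y = x⁻²`; here `c` is the
prefactor of `𝒮` and `(a, b)` the diagonal of `𝒯`. -/
lemma exists_coordinates : ∃ x y c a b : ℂ,
    calS = c • !![1, (phi : ℂ); (phi : ℂ), -1] ∧ calT = Matrix.diagonal ![a, b] ∧
    (phi : ℂ) ^ 2 = phi + 1 ∧ (phi : ℂ) = x ^ 2 + y ∧ x ^ 2 * y = 1 ∧
    c * (x + x * y) = 1 ∧ c ^ 2 * (2 + phi) = 1 ∧ a ^ 3 = -x ^ 3 ∧ b = -(a * y) := by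
  have hpos : 0 < 2 + phi := by rw [phi]; positivity
  have hc : Real.sqrt (2 + phi) ≠ 0 := (Real.sqrt_pos.2 hpos).ne'
  have hxy : exp (Real.pi / 10 * I) ^ 2 * exp (-(Real.pi / 5) * I) = 1 := by
    rw [← Complex.exp_nat_mul, ← Complex.exp_add, Complex.exp_eq_one_iff]
    exact ⟨0, by push_cast; ring⟩
  refine ⟨exp (Real.pi / 10 * I), exp (-(Real.pi / 5) * I), ((Real.sqrt (2 + phi))⁻¹ : ℝ),
    _, _, rfl, rfl, by exact_mod_cast phi_sq, ?_, hxy, ?_, ?_, ?_, ?_⟩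
  · rw [phi_eq_two_cos]
    push_cast
    rw [Complex.two_cos, ← Complex.exp_nat_mul]
    congr 2; push_cast; ring
  · have h : ((Real.sqrt (2 + phi) : ℝ) : ℂ) = exp (Real.pi / 10 * I)
        + exp (Real.pi / 10 * I) * exp (-(Real.pi / 5) * I) := by
      rw [sqrt_two_add_phi]
      push_cast
      rw [Complex.two_cos, ← Complex.exp_add]
      congr 2; ring
    rw [← h, ← Complex.ofReal_mul, inv_mul_cancel₀ hc, Complex.ofReal_one]
  · have h : (Real.sqrt (2 + phi))⁻¹ ^ 2 * (2 + phi) = 1 := by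
      rw [inv_pow, Real.sq_sqrt hpos.le, inv_mul_cancel₀ hpos.ne']
    exact_mod_cast h
  · rw [← Complex.exp_nat_mul, ← Complex.exp_nat_mul, ← mul_neg_one, ← Complex.exp_pi_mul_I,
      ← Complex.exp_add, Complex.exp_eq_exp_iff_exists_int]
    exact ⟨2, by push_cast; ring⟩
  · rw [← Complex.exp_add, ← mul_neg_one, ← Complex.exp_pi_mul_I,
      ← Complex.exp_add, Complex.exp_eq_exp_iff_exists_int]
    exact ⟨-1, by push_cast; ring⟩

/-- A `2 × 2` matrix with `(tr X) ^ 2 = det X` satisfies `X ^ 3 = -(tr X) ^ 3`, by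
Cayley–Hamilton. -/
lemma cube_of_trace_sq_eq_det {R : Type*} [CommRing R] (X : Matrix (Fin 2) (Fin 2) R)
    (h : X.trace ^ 2 = X.det) : X ^ 3 = (-X.trace ^ 3) • (1 : Matrix (Fin 2) (Fin 2) R) := by
  rw [Matrix.trace_fin_two, Matrix.det_fin_two] at h
  rw [Matrix.trace_fin_two]
  ext i j
  fin_cases i <;> fin_cases j <;>
    simp [pow_succ, Matrix.mul_apply, Fin.sum_univ_two]
  · linear_combination (X 0 0 + X 0 0 + X 1 1) * h
  · linear_combination (X 0 1) * h
  · linear_combination (X 1 0) * h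
  · linear_combination (X 0 0 + X 1 1 + X 1 1) * h

lemma calS_sq : calS ^ 2 = 1 := by
  obtain ⟨x, y, c, a, b, hS, -, hφ, -, -, -, hc, -, -⟩ := exists_coordinates
  rw [hS]
  ext i j
  fin_cases i <;> fin_cases j <;> simp [pow_two, Matrix.mul_apply, Fin.sum_univ_two]
  · linear_combination hc + c ^ 2 * hφ
  · ring
  · ring
  · linear_combination hc + c ^ 2 * hφ

lemma calS_mul_calT_cube : (calS * calT) ^ 3 = 1 := by
  obtain ⟨x, y, c, a, b, hS, hT, hφ, hφx, hxy, hc, -, ha, hb⟩ := exists_coordinates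
  have htr : (calS * calT).trace = c * a * (1 + y) := by
    rw [hS, hT]
    simp [Matrix.trace_fin_two, hb, Matrix.mul_apply, Fin.sum_univ_two, -Matrix.cons_mul]
    ring
  have hdet : (calS * calT).det = (c * a) ^ 2 * (y * (1 + (phi : ℂ) ^ 2)) := by
    rw [hS, hT]
    simp [Matrix.det_fin_two, hb, -Matrix.cons_mul]
    ring
  rw [cube_of_trace_sq_eq_det _ ?_, htr]
  · have : -(c * a * (1 + y)) ^ 3 = 1 := by
      calc -(c * a * (1 + y)) ^ 3 = (c * (x + x * y)) ^ 3 := by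
            linear_combination (-c ^ 3 * (1 + y) ^ 3) * ha
        _ = 1 := by rw [hc, one_pow]
    rw [this, one_smul]
  · rw [htr, hdet, hφ]
    linear_combination (-(c * a) ^ 2) * hxy - (c * a) ^ 2 * y * hφx

/-- `𝒮⁴ = 1` and `(𝒮𝒯)³ = 𝒮²`, so `S ↦ 𝒮`, `T ↦ 𝒯` extend to a homomorphism
`SL(2,ℤ) → GL₂(ℂ)`. -/
theorem stmt_4 :
    calS ^ 4 = 1 ∧ (calS * calT) ^ 3 = calS ^ 2 ∧
    ∃ ρ : SL(2, ℤ) →* Matrix (Fin 2) (Fin 2) ℂ, ρ SmatZ = calS ∧ ρ TmatZ = calT := by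
  have h4 : calS ^ 4 = 1 := by rw [show 4 = 2 * 2 from rfl, pow_mul, calS_sq, one_pow]
  have h3 : (calS * calT) ^ 3 = calS ^ 2 := by rw [calS_mul_calT_cube, calS_sq]
  exact ⟨h4, h3, exists_hom_of_relations _ _ h4 h3⟩
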